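/- For every integer n, the identity q^{−2n+1} + q^{−2n−1} + q^{−2n−3} − q^{−6n−3} = q + q^{−1} holds in the ring of Laurent polynomials ℤ[q, q^{−1}] if and only if n = 0 or n = −1. Equivalently, the Jones polynomial J(q) = (q^{−2n+1} + q^{−2n−1} + q^{−2n−3} − q^{−6n−3})/(q + q^{−1}) of the closure of the two-strand braid σ₁^{2n+1} equals 1 exactly when n = 0 or n = −1, so no non-trivial two-strand knot has trivial Jones polynomial. -/

import Mathlib

open LaurentPolynomial

/-! Moving the negative monomial to the right and putting `a = −(2n+1)`, the identity equates the
sums of the monomials with exponents in `{a + 2, a, a − 2}` and in `{1, −1, 3a}`. Neither list has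
repetitions, because `3a` is never `±1`; as distinct monomials are linearly independent, the two
sets of exponents coincide. Two numbers at distance `2` in `{a + 2, a, a − 2}` have `a` among them,
so `a = ±1`. -/

theorem sum_triple {ι M : Type*} [DecidableEq ι] [AddCommMonoid M] (f : ι → M) {i j k : ι}
    (hij : i ≠ j) (hik : i ≠ k) (hjk : j ≠ k) : ∑ l ∈ {i, j, k}, f l = f i + f j + f k := by
  simp [hij, hik, hjk, add_assoc]

section Monomials

variable {R : Type*} [Semiring R]

theorem coeff_sum_T (s : Finset ℤ) (j : ℤ) :
    (∑ k ∈ s, (T k : R[T;T⁻¹])).coeff j = if j ∈ s then 1 else 0 := by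
  simp [AddMonoidAlgebra.coeff_sum, Finsupp.finsetSum_apply, T_apply]

theorem sum_T_injective [Nontrivial R] :
    Function.Injective fun s : Finset ℤ => ∑ k ∈ s, (T k : R[T;T⁻¹]) := by
  intro s t hst
  ext j
  have hcoeff : (if j ∈ s then 1 else 0 : R) = if j ∈ t then 1 else 0 := by
    simpa only [coeff_sum_T] using congrArg (fun p : R[T;T⁻¹] => p.coeff j) hst
  by_cases hs : j ∈ s <;> by_cases ht : j ∈ t <;> simp_all

end Monomials

theorem add_two_self_sub_two_eq_iff (a : ℤ) :
    ({a + 2, a, a - 2} : Finset ℤ) = {1, -1, 3 * a} ↔ a = 1 ∨ a = -1 := by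
  constructor
  · intro h
    have h_one : (1 : ℤ) ∈ ({a + 2, a, a - 2} : Finset ℤ) := by simp [h]
    have h_neg_one : (-1 : ℤ) ∈ ({a + 2, a, a - 2} : Finset ℤ) := by simp [h]
    simp only [Finset.mem_insert, Finset.mem_singleton] at h_one h_neg_one
    omega
  · rintro (rfl | rfl) <;> decide

theorem T_add_two_add_T_add_T_sub_two_eq_iff {R : Type*} [Semiring R] [Nontrivial R] (a : ℤ) :
    (T (a + 2) + T a + T (a - 2) : R[T;T⁻¹]) = T 1 + T (-1) + T (3 * a) ↔
      a = 1 ∨ a = -1 := by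
  rw [← sum_triple T (by omega) (by omega) (by omega),
    ← sum_triple T (by omega) (by omega) (by omega), sum_T_injective.eq_iff,
    add_two_self_sub_two_eq_iff]

theorem stmt5_general {R : Type*} [Ring R] [Nontrivial R] (n : ℤ) :
    (T (-2 * n + 1) + T (-2 * n - 1) + T (-2 * n - 3) - T (-6 * n - 3) : R[T;T⁻¹]) =
      T 1 + T (-1) ↔ n = 0 ∨ n = -1 := by
  have h_top : -2 * n + 1 = -2 * n - 1 + 2 := by ring
  have h_bot : -2 * n - 3 = -2 * n - 1 - 2 := by ring
  have h_neg : -6 * n - 3 = 3 * (-2 * n - 1) := by ring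
  rw [sub_eq_iff_eq_add, h_top, h_bot, h_neg, T_add_two_add_T_add_T_sub_two_eq_iff]
  omega

/-- The identity `q^{−2n+1} + q^{−2n−1} + q^{−2n−3} − q^{−6n−3} = q + q^{−1}` holds in
`ℤ[q, q^{−1}]` (writing `T k` for the Laurent monomial `q^k`) if and only if `n = 0` or
`n = −1`; i.e. the closure of the two-strand braid `σ₁^{2n+1}` has trivial Jones
polynomial exactly for the two diagrams of the unknot. -/
theorem stmt5 (n : ℤ) :
    (T (-2 * n + 1) + T (-2 * n - 1) + T (-2 * n - 3) - T (-6 * n - 3) :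
        LaurentPolynomial ℤ) = T 1 + T (-1) ↔ n = 0 ∨ n = -1 :=
  stmt5_general n
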